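/- Let P be a finite set of points in the plane in general position and let s, t ∈ P. If the smallest axis-aligned square that contains both s and t and has t as one of its corners is empty, then there is a path from s to t in the θ₄-graph of P of length at most (√2 + 36)·‖s−t‖₂. -/

import Mathlib

open scoped BigOperators

/-- Euclidean distance between two points of the plane. -/
noncomputable def dist2 (p q : ℝ × ℝ) : ℝ := Real.sqrt ((p.1 - q.1) ^ 2 + (p.2 - q.2) ^ 2)

/-- `L₁` distance between two points of the plane. -/
def dist1 (p q : ℝ × ℝ) : ℝ := |p.1 - q.1| + |p.2 - q.2|

/-- `L∞` distance between two points of the plane (half the side of `S_t(s)`). -/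
def distInf (p q : ℝ × ℝ) : ℝ := max |p.1 - q.1| |p.2 - q.2|

/-- `cone i p q` : the point `q` lies in the open cone (quadrant) `C_i(p)`. -/
def cone (i : ℕ) (p q : ℝ × ℝ) : Prop :=
  if i = 0 then p.1 < q.1 ∧ q.2 < p.2
  else if i = 1 then p.1 < q.1 ∧ p.2 < q.2
  else if i = 2 then q.1 < p.1 ∧ p.2 < q.2
  else q.1 < p.1 ∧ q.2 < p.2

/-- General position: no two points of `P` on a common vertical line, horizontal line,
or line of slope `+1` or `-1`. -/
def GenPos (P : Finset (ℝ × ℝ)) : Prop :=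
  ∀ p ∈ P, ∀ q ∈ P, p ≠ q →
    p.1 ≠ q.1 ∧ p.2 ≠ q.2 ∧ p.2 - p.1 ≠ q.2 - q.1 ∧ p.2 + p.1 ≠ q.2 + q.1

/-- `IsNbr P i p q` : `q = n_i(p)`, i.e. `q` is a point of `P` in `C_i(p)` minimizing
the `L₁`-distance to `p`. -/
def IsNbr (P : Finset (ℝ × ℝ)) (i : ℕ) (p q : ℝ × ℝ) : Prop :=
  q ∈ P ∧ cone i p q ∧ ∀ r ∈ P, cone i p r → dist1 p q ≤ dist1 p r

/-- Adjacency in the θ₄-graph of `P`. -/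
def Theta4Adj (P : Finset (ℝ × ℝ)) (p q : ℝ × ℝ) : Prop :=
  p ∈ P ∧ q ∈ P ∧ ∃ i < 4, (IsNbr P i p q ∨ IsNbr P i q p)

/-- A walk with `k` edges in the θ₄-graph of `P`, given by its vertices `v 0, …, v k`. -/
def IsTheta4Path (P : Finset (ℝ × ℝ)) (k : ℕ) (v : ℕ → ℝ × ℝ) : Prop :=
  v 0 ∈ P ∧ ∀ j < k, Theta4Adj P (v j) (v (j + 1))

/-- The Euclidean length of a path with `k` edges. -/
noncomputable def pathLength (k : ℕ) (v : ℕ → ℝ × ℝ) : ℝ :=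
  ∑ j ∈ Finset.range k, dist2 (v j) (v (j + 1))

/-- `p` is `t`-protected: no point of `P` lying in `C₁(p)` is on or below the line `ℓ⁻_t`
of slope `-1` through `t`. -/
def TProtected (P : Finset (ℝ × ℝ)) (t p : ℝ × ℝ) : Prop :=
  ∀ q ∈ P, cone 1 p q → t.1 + t.2 < q.1 + q.2

/-!
Translate and reflect so that `t = 0` and `s` lies in `C₃(0)`. First walk from `s` to `p = n₁(s)`;
since `0` lies in `C₁(s)`, `p` is on or below the antidiagonal `x + y = 0`, and the empty square
puts it in `C₂(0)` or `C₀(0)` unless `p = 0`. Up to a reflection `p` is above the diagonal `y = x`.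

From a point `c` above the diagonal, move to `n₀(c)` if `C₀(c)` has a point above the diagonal,
and to `n₃(c)` otherwise, exchanging the axes whenever the diagonal is crossed. Let `α` bound
`x + y` over the points above the diagonal that are no higher than `c`. Every move costs at most
the decrease of the potential `|y - x| + 2α`: a move to `n₀(c)` is paid for by `y - x`, and after
a move to `n₃(c)` one may take for `α` the value of `x + y` at the new point. The larger coordinate
decreases strictly, so the walk ends, and it can only end at `0`.

At `p = (x, y)` take `α = 2y`: the potential is at most `6‖s‖_∞`, so the whole path has length
at most `‖s‖₁ + 6‖s‖_∞ ≤ (√2 + 6)‖s‖₂`.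
-/

theorem dist2_nonneg (p q : ℝ × ℝ) : 0 ≤ dist2 p q := Real.sqrt_nonneg _

theorem dist2_le_dist1 (p q : ℝ × ℝ) : dist2 p q ≤ dist1 p q := by
  refine Real.sqrt_le_iff.2 ⟨add_nonneg (abs_nonneg _) (abs_nonneg _), ?_⟩
  rw [← sq_abs (p.1 - q.1), ← sq_abs (p.2 - q.2)]
  exact pow_add_pow_le (abs_nonneg _) (abs_nonneg _) two_ne_zero

theorem distInf_le_dist2 (p q : ℝ × ℝ) : distInf p q ≤ dist2 p q :=
  max_le (Real.abs_le_sqrt (le_add_of_nonneg_right (sq_nonneg _)))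
    (Real.abs_le_sqrt (le_add_of_nonneg_left (sq_nonneg _)))

theorem dist1_le_sqrt_two_mul_dist2 (p q : ℝ × ℝ) : dist1 p q ≤ √2 * dist2 p q := by
  rw [dist2, ← Real.sqrt_mul zero_le_two, ← sq_abs (p.1 - q.1), ← sq_abs (p.2 - q.2)]
  exact Real.le_sqrt_of_sq_le add_sq_le

section Cones

variable {P : Finset (ℝ × ℝ)} {p q r x : ℝ × ℝ} {i : ℕ}

theorem cone_zero_iff : cone 0 p q ↔ p.1 < q.1 ∧ q.2 < p.2 := Iff.rfl

theorem cone_one_iff : cone 1 p q ↔ p.1 < q.1 ∧ p.2 < q.2 := Iff.rfl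

theorem cone_three_iff : cone 3 p q ↔ q.1 < p.1 ∧ q.2 < p.2 := Iff.rfl

theorem dist1_of_cone_zero (h : cone 0 p q) : dist1 p q = (p.2 - p.1) - (q.2 - q.1) := by
  rw [cone_zero_iff] at h
  rw [dist1, abs_of_neg (sub_neg.2 h.1), abs_of_pos (sub_pos.2 h.2)]
  ring

theorem dist1_of_cone_one (h : cone 1 p q) : dist1 p q = (q.1 + q.2) - (p.1 + p.2) := by
  rw [cone_one_iff] at h
  rw [dist1, abs_of_neg (sub_neg.2 h.1), abs_of_neg (sub_neg.2 h.2)]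
  ring

theorem dist1_of_cone_three (h : cone 3 p q) : dist1 p q = (p.1 + p.2) - (q.1 + q.2) := by
  rw [cone_three_iff] at h
  rw [dist1, abs_of_pos (sub_pos.2 h.1), abs_of_pos (sub_pos.2 h.2)]
  ring

theorem exists_cone (h₁ : p.1 ≠ q.1) (h₂ : p.2 ≠ q.2) : ∃ i < 4, cone i p q := by
  rcases h₁.lt_or_gt with h₁ | h₁ <;> rcases h₂.lt_or_gt with h₂ | h₂
  · exact ⟨1, by norm_num, h₁, h₂⟩
  · exact ⟨0, by norm_num, h₁, h₂⟩
  · exact ⟨2, by norm_num, h₁, h₂⟩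
  · exact ⟨3, by norm_num, h₁, h₂⟩

theorem cone.mul_sub_pos (hq : cone i p q) (hr : cone i p r) :
    0 < (q.1 - p.1) * (r.1 - p.1) ∧ 0 < (q.2 - p.2) * (r.2 - p.2) := by
  unfold cone at hq hr
  split_ifs at hq hr <;> constructor <;>
    first
    | exact mul_pos (by linarith) (by linarith)
    | exact mul_pos_of_neg_of_neg (by linarith) (by linarith)

theorem exists_isNbr (hq : q ∈ P) (h : cone i p q) : ∃ r, IsNbr P i p r := by
  classical
  obtain ⟨r, hr, hmin⟩ := (P.filter (cone i p)).exists_min_image (dist1 p)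
    ⟨q, Finset.mem_filter.2 ⟨hq, h⟩⟩
  rw [Finset.mem_filter] at hr
  exact ⟨r, hr.1, hr.2, fun x hx hc => hmin x (Finset.mem_filter.2 ⟨hx, hc⟩)⟩

theorem IsNbr.theta4Adj (h : IsNbr P i p r) (hi : i < 4) (hp : p ∈ P) : Theta4Adj P p r :=
  ⟨hp, h.1, i, hi, .inl h⟩

theorem IsNbr.sub_le_of_cone_zero (h : IsNbr P 0 p r) (hx : x ∈ P) (hc : cone 0 p x) :
    x.2 - x.1 ≤ r.2 - r.1 := by
  have := h.2.2 x hx hc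
  rw [dist1_of_cone_zero h.2.1, dist1_of_cone_zero hc] at this
  linarith

theorem IsNbr.le_add_of_cone_one (h : IsNbr P 1 p r) (hx : x ∈ P) (hc : cone 1 p x) :
    r.1 + r.2 ≤ x.1 + x.2 := by
  have := h.2.2 x hx hc
  rw [dist1_of_cone_one h.2.1, dist1_of_cone_one hc] at this
  linarith

theorem IsNbr.add_le_of_cone_three (h : IsNbr P 3 p r) (hx : x ∈ P) (hc : cone 3 p x) :
    x.1 + x.2 ≤ r.1 + r.2 := by
  have := h.2.2 x hx hc
  rw [dist1_of_cone_three h.2.1, dist1_of_cone_three hc] at this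
  linarith

end Cones

/-- The θ₄-graph of `P` contains a path from `p` to `q` of Euclidean length at most `L`. -/
def HasPathLE (P : Finset (ℝ × ℝ)) (p q : ℝ × ℝ) (L : ℝ) : Prop :=
  ∃ (k : ℕ) (v : ℕ → ℝ × ℝ), IsTheta4Path P k v ∧ v 0 = p ∧ v k = q ∧ pathLength k v ≤ L

namespace HasPathLE

variable {P : Finset (ℝ × ℝ)} {p q r : ℝ × ℝ} {L L' : ℝ}

theorem refl (hp : p ∈ P) (hL : 0 ≤ L) : HasPathLE P p p L :=
  ⟨0, fun _ => p, ⟨hp, fun _ hj => absurd hj (Nat.not_lt_zero _)⟩, rfl, rfl, hL⟩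

theorem mono (h : HasPathLE P p q L) (hL : L ≤ L') : HasPathLE P p q L' :=
  let ⟨k, v, hv, h0, hk, hlen⟩ := h
  ⟨k, v, hv, h0, hk, hlen.trans hL⟩

theorem cons (h : Theta4Adj P p q) (hqr : HasPathLE P q r L) :
    HasPathLE P p r (dist2 p q + L) := by
  obtain ⟨k, v, hv, rfl, hk, hlen⟩ := hqr
  refine ⟨k + 1, fun n => n.casesOn p v, ⟨h.1, ?_⟩, rfl, hk, ?_⟩
  · rintro (_ | j) hj
    · exact h
    · exact hv.2 j (Nat.lt_of_succ_lt_succ hj)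
  · rw [pathLength, Finset.sum_range_succ', add_comm]
    exact add_le_add_right hlen _

end HasPathLE

/-- No two points of `P` lie on a common vertical or horizontal line, so that distinct points lie in
cones of each other. A minimizer `n_i(p)` need not be unique; `IsNbr` admits all of them. -/
def DistinctCoords (P : Finset (ℝ × ℝ)) : Prop :=
  (P : Set (ℝ × ℝ)).Pairwise fun p q => p.1 ≠ q.1 ∧ p.2 ≠ q.2

theorem GenPos.distinctCoords {P : Finset (ℝ × ℝ)} (hP : GenPos P) : DistinctCoords P :=
  fun p hp q hq hpq => ⟨(hP p hp q hq hpq).1, (hP p hp q hq hpq).2.1⟩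

/-- A symmetry of the θ₄-construction: a bijection of the plane that preserves coordinate distances
up to exchanging the two axes, and permutes the four cones. -/
structure IsTheta4Symm (φ : ℝ × ℝ ≃ ℝ × ℝ) : Prop where
  abs_sub (p q : ℝ × ℝ) :
    (|(φ p).1 - (φ q).1| = |p.1 - q.1| ∧ |(φ p).2 - (φ q).2| = |p.2 - q.2|) ∨
      (|(φ p).1 - (φ q).1| = |p.2 - q.2| ∧ |(φ p).2 - (φ q).2| = |p.1 - q.1|)
  exists_cone_iff (i : ℕ) (hi : i < 4) :
    ∃ j < 4, ∀ p q : ℝ × ℝ, cone i (φ p) (φ q) ↔ cone j p q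

namespace IsTheta4Symm

variable {φ ψ : ℝ × ℝ ≃ ℝ × ℝ}

theorem trans (hφ : IsTheta4Symm φ) (hψ : IsTheta4Symm ψ) : IsTheta4Symm (φ.trans ψ) where
  abs_sub p q := by
    simp only [Equiv.trans_apply]
    rcases hψ.abs_sub (φ p) (φ q) with ⟨h₁, h₂⟩ | ⟨h₁, h₂⟩ <;>
      rcases hφ.abs_sub p q with ⟨h₃, h₄⟩ | ⟨h₃, h₄⟩ <;> simp [h₁, h₂, h₃, h₄]
  exists_cone_iff i hi := by
    obtain ⟨j, hj, hij⟩ := hψ.exists_cone_iff i hi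
    obtain ⟨k, hk, hjk⟩ := hφ.exists_cone_iff j hj
    exact ⟨k, hk, fun p q => (hij _ _).trans (hjk p q)⟩

theorem subRight (t : ℝ × ℝ) : IsTheta4Symm (Equiv.subRight t) where
  abs_sub p q := by simp
  exists_cone_iff i hi := ⟨i, hi, fun p q => by simp [cone]⟩

theorem prodComm : IsTheta4Symm (Equiv.prodComm ℝ ℝ) where
  abs_sub _ _ := .inr ⟨rfl, rfl⟩
  exists_cone_iff i hi := by
    interval_cases i
    · exact ⟨2, by norm_num, fun p q => by simp [cone, and_comm]⟩
    · exact ⟨1, by norm_num, fun p q => by simp [cone, and_comm]⟩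
    · exact ⟨0, by norm_num, fun p q => by simp [cone, and_comm]⟩
    · exact ⟨3, by norm_num, fun p q => by simp [cone, and_comm]⟩

theorem negFst : IsTheta4Symm ((Equiv.neg ℝ).prodCongr (Equiv.refl ℝ)) where
  abs_sub p q := .inl ⟨by simp [neg_add_eq_sub, abs_sub_comm], rfl⟩
  exists_cone_iff i hi := by
    interval_cases i
    · exact ⟨3, by norm_num, fun p q => by simp [cone]⟩
    · exact ⟨2, by norm_num, fun p q => by simp [cone]⟩
    · exact ⟨1, by norm_num, fun p q => by simp [cone]⟩
    · exact ⟨0, by norm_num, fun p q => by simp [cone]⟩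

theorem negSnd : IsTheta4Symm ((Equiv.refl ℝ).prodCongr (Equiv.neg ℝ)) :=
  prodComm.trans (negFst.trans prodComm)

theorem exists_cone_three_iff (t : ℝ × ℝ) {i : ℕ} (hi : i < 4) :
    ∃ φ : ℝ × ℝ ≃ ℝ × ℝ, IsTheta4Symm φ ∧ φ t = 0 ∧
      ∀ p q, cone 3 (φ p) (φ q) ↔ cone i p q := by
  interval_cases i
  · exact ⟨_, (subRight t).trans negFst, by ext <;> simp, fun p q => by simp [cone]⟩
  · exact ⟨_, (subRight t).trans (negFst.trans negSnd), by ext <;> simp, fun p q => by simp [cone]⟩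
  · exact ⟨_, (subRight t).trans negSnd, by ext <;> simp, fun p q => by simp [cone]⟩
  · exact ⟨_, subRight t, by simp, fun p q => by simp [cone]⟩

variable (hφ : IsTheta4Symm φ) (p q : ℝ × ℝ)

include hφ

theorem dist1_map : dist1 (φ p) (φ q) = dist1 p q := by
  rcases hφ.abs_sub p q with ⟨h₁, h₂⟩ | ⟨h₁, h₂⟩
  · rw [dist1, h₁, h₂, dist1]
  · rw [dist1, h₁, h₂, dist1, add_comm]

theorem distInf_map : distInf (φ p) (φ q) = distInf p q := by
  rcases hφ.abs_sub p q with ⟨h₁, h₂⟩ | ⟨h₁, h₂⟩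
  · rw [distInf, h₁, h₂, distInf]
  · rw [distInf, h₁, h₂, distInf, max_comm]

theorem dist2_map : dist2 (φ p) (φ q) = dist2 p q := by
  simp only [dist2, ← sq_abs (_ - _)]
  rcases hφ.abs_sub p q with ⟨h₁, h₂⟩ | ⟨h₁, h₂⟩
  · rw [h₁, h₂]
  · rw [h₁, h₂, add_comm]

variable {P : Finset (ℝ × ℝ)} {p q} {L : ℝ}

theorem distinctCoords_map (hP : DistinctCoords P) :
    DistinctCoords (P.map φ.toEmbedding) := by
  simp only [DistinctCoords, Finset.coe_map, Equiv.coe_toEmbedding]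
  refine Set.Pairwise.image fun p hp q hq hpq => ?_
  have hne := hP hp hq hpq
  simp only [← sub_ne_zero (b := Prod.fst _), ← sub_ne_zero (b := Prod.snd _), ← abs_pos,
    Function.onFun] at hne ⊢
  rcases hφ.abs_sub p q with ⟨h₁, h₂⟩ | ⟨h₁, h₂⟩
  · rwa [h₁, h₂]
  · rwa [h₁, h₂, and_comm]

theorem theta4Adj_of_map (h : Theta4Adj (P.map φ.toEmbedding) (φ p) (φ q)) :
    Theta4Adj P p q := by
  obtain ⟨hp, hq, i, hi, h⟩ := h
  obtain ⟨j, hj, hij⟩ := hφ.exists_cone_iff i hi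
  have isNbr_map (x y) : IsNbr (P.map φ.toEmbedding) i (φ x) (φ y) ↔ IsNbr P j x y := by
    rw [IsNbr, Finset.forall_mem_map, Finset.mem_map_equiv, Equiv.symm_apply_apply]
    simp only [IsNbr, Equiv.coe_toEmbedding, hij, hφ.dist1_map]
  rw [isNbr_map, isNbr_map] at h
  exact ⟨by simpa using hp, by simpa using hq, j, hj, h⟩

theorem hasPathLE_of_map (h : HasPathLE (P.map φ.toEmbedding) (φ p) (φ q) L) :
    HasPathLE P p q L := by
  obtain ⟨k, v, ⟨hv0, hv⟩, h0, hk, hlen⟩ := h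
  obtain ⟨w, rfl⟩ : ∃ w, v = φ ∘ w := ⟨φ.symm ∘ v, by ext1; simp⟩
  exact ⟨k, w, ⟨by simpa using hv0, fun j hj => hφ.theta4Adj_of_map (hv j hj)⟩,
    φ.injective h0, φ.injective hk, by simpa [pathLength, hφ.dist2_map] using hlen⟩

end IsTheta4Symm

/-- The normalized situation, with `t = 0`: the open square of side `d` whose top right corner
is `0` contains no point of `P`. -/
structure EmptyCorner (P : Finset (ℝ × ℝ)) (d : ℝ) : Prop where
  distinctCoords : DistinctCoords P
  zero_mem : 0 ∈ P
  le_distInf (q : ℝ × ℝ) (hq : q ∈ P) (hc : cone 3 0 q) : d ≤ distInf q 0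

/-- The invariant of the descent to `0`, at a point `c` on or above the diagonal. The value `α`
bounds `x + y` over the points of `P` on or above the diagonal that are no higher than `c`. -/
structure DescentInvariant (P : Finset (ℝ × ℝ)) (d α : ℝ) (c : ℝ × ℝ) : Prop where
  mem : c ∈ P
  snd_pos : 0 < c.2
  fst_le_snd : c.1 ≤ c.2
  neg_le_fst : -d ≤ c.1
  snd_le : c.2 ≤ d
  add_le (q : ℝ × ℝ) (hq : q ∈ P) (hqc : q.2 ≤ c.2) (hdiag : q.1 ≤ q.2) : q.1 + q.2 ≤ α

section Descent

variable {P : Finset (ℝ × ℝ)} {d α : ℝ} {c q s : ℝ × ℝ}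

theorem EmptyCorner.swap (hP : EmptyCorner P d) :
    EmptyCorner (P.map (Equiv.prodComm ℝ ℝ).toEmbedding) d where
  distinctCoords := IsTheta4Symm.prodComm.distinctCoords_map hP.distinctCoords
  zero_mem := Finset.mem_map_of_mem (Equiv.prodComm ℝ ℝ).toEmbedding hP.zero_mem
  le_distInf := by
    rw [Finset.forall_mem_map]
    intro q hq hc
    exact (hP.le_distInf q hq hc.symm).trans_eq (max_comm _ _)

theorem EmptyCorner.eq_zero_or_snd_pos (hP : EmptyCorner P d) (hq : q ∈ P)
    (hd : -d < q.1) (hdiag : q.1 ≤ q.2) : q = 0 ∨ 0 < q.2 := by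
  by_contra! ⟨hne, hsnd⟩
  have h2 : q.2 < 0 := hsnd.lt_of_ne (hP.distinctCoords hq hP.zero_mem hne).2
  have h1 : q.1 < 0 := hdiag.trans_lt h2
  refine (hP.le_distInf q hq ⟨h1, h2⟩).not_gt (max_lt ?_ ?_)
  · rw [Prod.fst_zero, sub_zero, abs_of_neg h1]
    linarith
  · rw [Prod.snd_zero, sub_zero, abs_of_neg h2]
    linarith

theorem DescentInvariant.exists_isNbr_zero (h : DescentInvariant P d α c) (hP : EmptyCorner P d)
    (hq : q ∈ P) (hc : cone 0 c q) (hdiag : q.1 ≤ q.2) :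
    ∃ r, IsNbr P 0 c r ∧ (r = 0 ∨ DescentInvariant P d α r) := by
  obtain ⟨r, hr⟩ := exists_isNbr hq hc
  have hrc := cone_zero_iff.1 hr.2.1
  have hr_diag : r.1 ≤ r.2 := by linarith [hr.sub_le_of_cone_zero hq hc]
  refine ⟨r, hr, (hP.eq_zero_or_snd_pos hr.1 (by linarith [h.neg_le_fst]) hr_diag).imp_right
    fun hpos => ⟨hr.1, hpos, hr_diag, ?_, ?_, fun x hx hxr => h.add_le x hx ?_⟩⟩
  · linarith [h.neg_le_fst]
  · linarith [h.snd_le]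
  · linarith

theorem DescentInvariant.cone_three_zero (h : DescentInvariant P d α c) (hP : EmptyCorner P d)
    (hdiag : ∀ q ∈ P, cone 0 c q → q.2 < q.1) : cone 3 c 0 := by
  have hne : c ≠ 0 := fun h0 => h.snd_pos.ne' (by rw [h0, Prod.snd_zero])
  have hfst : c.1 ≠ 0 := (hP.distinctCoords h.mem hP.zero_mem hne).1
  refine ⟨hfst.lt_or_gt.resolve_left fun hlt => ?_, h.snd_pos⟩
  exact lt_irrefl _ (hdiag 0 hP.zero_mem ⟨hlt, h.snd_pos⟩)

theorem DescentInvariant.exists_isNbr_three (h : DescentInvariant P d α c) (hP : EmptyCorner P d)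
    (hdiag : ∀ q ∈ P, cone 0 c q → q.2 < q.1) :
    ∃ r, IsNbr P 3 c r ∧ (r = 0 ∨ DescentInvariant P d (r.1 + r.2) r ∨
      DescentInvariant (P.map (Equiv.prodComm ℝ ℝ).toEmbedding) d (r.1 + r.2) r.swap) := by
  have h0 := h.cone_three_zero hP hdiag
  obtain ⟨r, hr⟩ := exists_isNbr hP.zero_mem h0
  have hrc := cone_three_iff.1 hr.2.1
  have hsum : 0 ≤ r.1 + r.2 := by simpa using hr.add_le_of_cone_three hP.zero_mem h0
  have hc_diag := h.fst_le_snd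
  have hc_le := h.snd_le
  refine ⟨r, hr, ?_⟩
  rcases le_or_gt r.1 r.2 with hle | hlt
  · refine (hP.eq_zero_or_snd_pos hr.1 (by linarith) hle).imp_right fun hpos =>
      .inl ⟨hr.1, hpos, hle, by linarith, by linarith, fun q hq hqr hq_diag => ?_⟩
    have hqc : q.2 < c.2 := hqr.trans_lt hrc.2
    have hne : q.1 ≠ c.1 := (hP.distinctCoords hq h.mem fun e => hqc.ne (e ▸ rfl)).1
    refine hr.add_le_of_cone_three hq ⟨hne.lt_or_gt.resolve_right fun hgt => ?_, hqc⟩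
    exact hq_diag.not_gt (hdiag q hq ⟨hgt, hqc⟩)
  · refine .inr (.inr ⟨Finset.mem_map_of_mem _ hr.1, ?_, hlt.le, ?_, ?_, ?_⟩)
    · change 0 < r.1
      linarith
    · change -d ≤ r.2
      linarith
    · change r.1 ≤ d
      linarith
    · simp only [Finset.forall_mem_map, Equiv.coe_toEmbedding, Equiv.coe_prodComm, Prod.fst_swap,
        Prod.snd_swap]
      intro q hq hqr hq_diag
      rw [add_comm]
      exact hr.add_le_of_cone_three hq (cone_three_iff.2 ⟨by linarith, by linarith⟩)

/-- The number of points of `P` whose larger coordinate is less than that of `c`: the termination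
measure of the descent. -/
noncomputable def heightRank (P : Finset (ℝ × ℝ)) (c : ℝ × ℝ) : ℕ :=
  (P.filter fun q => max q.1 q.2 < max c.1 c.2).card

theorem heightRank_lt_heightRank (hq : q ∈ P) (h : max q.1 q.2 < max c.1 c.2) :
    heightRank P q < heightRank P c := by
  refine Finset.card_lt_card (Finset.ssubset_iff_of_subset ?_ |>.2 ⟨q, ?_, ?_⟩)
  · exact Finset.monotone_filter_right P fun _ _ hx => hx.trans h
  · exact Finset.mem_filter.2 ⟨hq, h⟩
  · exact fun hmem => lt_irrefl _ (Finset.mem_filter.1 hmem).2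

theorem heightRank_swap (P : Finset (ℝ × ℝ)) (c : ℝ × ℝ) :
    heightRank (P.map (Equiv.prodComm ℝ ℝ).toEmbedding) c.swap = heightRank P c := by
  simp only [heightRank, Finset.filter_map, Finset.card_map, Function.comp_def,
    Equiv.coe_toEmbedding, Equiv.coe_prodComm, Prod.fst_swap, Prod.snd_swap, max_comm]

theorem DescentInvariant.hasPathLE (h : DescentInvariant P d α c) (hP : EmptyCorner P d) :
    HasPathLE P c 0 (c.2 - c.1 + 2 * α) := by
  induction hn : heightRank P c using Nat.strong_induction_on generalizing P c α with
  | _ n ih =>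
  subst hn
  have hα : c.1 + c.2 ≤ α := h.add_le c h.mem le_rfl h.fst_le_snd
  have hα₀ : 0 ≤ α := by simpa using h.add_le 0 hP.zero_mem h.snd_pos.le le_rfl
  have hc_diag := h.fst_le_snd
  have cons {i : ℕ} {r : ℝ × ℝ} {L : ℝ} (hi : i < 4) (hr : IsNbr P i c r)
      (hpath : HasPathLE P r 0 L) (hL : dist1 c r + L ≤ c.2 - c.1 + 2 * α) :
      HasPathLE P c 0 (c.2 - c.1 + 2 * α) :=
    (hpath.cons (hr.theta4Adj hi h.mem)).mono (by linarith [dist2_le_dist1 c r])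
  by_cases hdiag : ∃ q ∈ P, cone 0 c q ∧ q.1 ≤ q.2
  · obtain ⟨q, hq, hc, hq_diag⟩ := hdiag
    obtain ⟨r, hr, hr0⟩ := h.exists_isNbr_zero hP hq hc hq_diag
    have hdist := dist1_of_cone_zero hr.2.1
    rcases hr0 with rfl | hr'
    · rw [Prod.fst_zero, Prod.snd_zero] at hdist
      exact cons (by norm_num) hr (.refl hP.zero_mem le_rfl) (by linarith)
    · have hrank := heightRank_lt_heightRank (c := c) hr.1 (by
        rw [max_eq_right hr'.fst_le_snd, max_eq_right hc_diag]; exact hr.2.1.2)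
      exact cons (by norm_num) hr (ih _ hrank hr' hP rfl) (by linarith)
  · push Not at hdiag
    obtain ⟨r, hr, hr0⟩ := h.exists_isNbr_three hP hdiag
    have hrc := cone_three_iff.1 hr.2.1
    have hdist := dist1_of_cone_three hr.2.1
    have hrank := heightRank_lt_heightRank hr.1 (max_lt_max hrc.1 hrc.2)
    -- The cost of the move plus the new potential is `c.1 + c.2 + 2 * max r.1 r.2`, so it suffices
    -- that `c.1 + max r.1 r.2 ≤ α`, which follows from `max r.1 r.2 < c.2`.
    rcases hr0 with rfl | hr' | hr'
    · rw [Prod.fst_zero, Prod.snd_zero] at hdist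
      exact cons (by norm_num) hr (.refl hP.zero_mem le_rfl) (by linarith)
    · exact cons (by norm_num) hr (ih _ hrank hr' hP rfl) (by linarith)
    · have hpath := ih _ hrank hr' hP.swap (heightRank_swap P r)
      exact cons (by norm_num) hr (IsTheta4Symm.prodComm.hasPathLE_of_map hpath)
        (by simp only [Prod.fst_swap, Prod.snd_swap]; linarith)

theorem EmptyCorner.hasPathLE_of_add_nonpos (hP : EmptyCorner P d) (hq : q ∈ P)
    (hfst : -d < q.1) (hdiag : q.1 ≤ q.2) (hsum : q.1 + q.2 ≤ 0) : HasPathLE P q 0 (6 * d) := by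
  rcases hP.eq_zero_or_snd_pos hq hfst hdiag with rfl | hpos
  · rw [Prod.fst_zero] at hfst
    exact .refl hq (by linarith)
  · have h : DescentInvariant P d (2 * q.2) q :=
      ⟨hq, hpos, hdiag, hfst.le, by linarith, fun x _ hxq hx_diag => by linarith⟩
    exact (h.hasPathLE hP).mono (by linarith)

theorem EmptyCorner.hasPathLE (hP : EmptyCorner P (distInf s 0)) (hs : s ∈ P)
    (hc : cone 3 0 s) : HasPathLE P s 0 (dist1 s 0 + 6 * distInf s 0) := by
  have hc' : cone 1 s 0 := hc
  obtain ⟨p, hp⟩ := exists_isNbr hP.zero_mem hc'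
  have hsp := cone_one_iff.1 hp.2.1
  have hsum : p.1 + p.2 ≤ 0 := by simpa using hp.le_add_of_cone_one hP.zero_mem hc'
  have hs₁ : -distInf s 0 ≤ s.1 := (abs_le.1 (by simp [distInf])).1
  have hs₂ : -distInf s 0 ≤ s.2 := (abs_le.1 (by simp [distInf])).1
  have hpath : HasPathLE P p 0 (6 * distInf s 0) := by
    rcases le_total p.1 p.2 with hdiag | hdiag
    · exact hP.hasPathLE_of_add_nonpos hp.1 (by linarith) hdiag hsum
    · refine IsTheta4Symm.prodComm.hasPathLE_of_map (hP.swap.hasPathLE_of_add_nonpos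
        (Finset.mem_map_of_mem _ hp.1) ?_ hdiag ((add_comm _ _).trans_le hsum))
      exact hs₂.trans_lt hsp.2
  have hdist : dist1 s p ≤ dist1 s 0 := hp.2.2 0 hP.zero_mem hc'
  exact (hpath.cons (hp.theta4Adj (by norm_num) hs)).mono (by linarith [dist2_le_dist1 s p])

end Descent

theorem hasPathLE_of_forall_cone {P : Finset (ℝ × ℝ)} (hP : DistinctCoords P) {s t : ℝ × ℝ}
    (hs : s ∈ P) (ht : t ∈ P) {i : ℕ} (hi : i < 4) (hc : cone i t s)
    (hempty : ∀ q ∈ P, cone i t q → distInf s t ≤ distInf q t) :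
    HasPathLE P s t (dist1 s t + 6 * distInf s t) := by
  obtain ⟨φ, hφ, hφt, hcone⟩ := IsTheta4Symm.exists_cone_three_iff t hi
  have hcorner : EmptyCorner (P.map φ.toEmbedding) (distInf (φ s) 0) := by
    refine ⟨hφ.distinctCoords_map hP, hφt ▸ Finset.mem_map_of_mem φ.toEmbedding ht, ?_⟩
    simpa only [Finset.forall_mem_map, Equiv.coe_toEmbedding, ← hφt, hcone, hφ.distInf_map]
  have hpath := hcorner.hasPathLE (Finset.mem_map_of_mem _ hs) (by rwa [← hφt, hcone])
  rw [← hφt, hφ.dist1_map, hφ.distInf_map] at hpath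
  exact hφ.hasPathLE_of_map hpath

theorem approx_Linfty_edge_general (P : Finset (ℝ × ℝ)) (hP : DistinctCoords P) (s t : ℝ × ℝ)
    (hs : s ∈ P) (ht : t ∈ P)
    (hempty : ∀ q ∈ P,
      ¬ (|q.1 - t.1| < distInf s t ∧ |q.2 - t.2| < distInf s t ∧
         0 < (q.1 - t.1) * (s.1 - t.1) ∧ 0 < (q.2 - t.2) * (s.2 - t.2))) :
    HasPathLE P s t ((√2 + 6) * dist2 s t) := by
  rcases eq_or_ne s t with rfl | hst
  · exact .refl hs (mul_nonneg (by positivity) (dist2_nonneg _ _))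
  have hne := hP ht hs hst.symm
  obtain ⟨i, hi, hc⟩ := exists_cone hne.1 hne.2
  refine (hasPathLE_of_forall_cone hP hs ht hi hc fun q hq hqc => ?_).mono ?_
  · by_contra! hlt
    obtain ⟨h₁, h₂⟩ := max_lt_iff.1 hlt
    exact hempty q hq ⟨h₁, h₂, hqc.mul_sub_pos hc⟩
  · linarith [dist1_le_sqrt_two_mul_dist2 s t, distInf_le_dist2 s t]

/-- If the smallest axis-aligned square containing `s` and `t` that has `t` as a corner is
empty, then there is an `s`-`t`-path in the θ₄-graph of length at most `(√2+36)·‖s−t‖₂`. -/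
theorem approx_Linfty_edge (P : Finset (ℝ × ℝ)) (hP : GenPos P) (s t : ℝ × ℝ)
    (hs : s ∈ P) (ht : t ∈ P)
    (hempty : ∀ q ∈ P,
      ¬ (|q.1 - t.1| < distInf s t ∧ |q.2 - t.2| < distInf s t ∧
         0 < (q.1 - t.1) * (s.1 - t.1) ∧ 0 < (q.2 - t.2) * (s.2 - t.2))) :
    ∃ (k : ℕ) (v : ℕ → ℝ × ℝ), IsTheta4Path P k v ∧ v 0 = s ∧ v k = t ∧
      pathLength k v ≤ (Real.sqrt 2 + 36) * dist2 s t := by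
  exact (approx_Linfty_edge_general P hP.distinctCoords s t hs ht hempty).mono
    (mul_le_mul_of_nonneg_right (by linarith) (dist2_nonneg s t))
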